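/- Let G be an n-vertex unicyclic graph with unique cycle C_l and branches T_1,…,T_l. Then the multiplicative degree-Kirchhoff index satisfies Kf*(G) = 4·Kf(G) + 4·Σ_{i=1}^{l} D_{T_i}(v_i) − (2n+1)(n−l). -/

import Mathlib

open SimpleGraph Finset

attribute [local instance] Classical.propDecidable

variable {V : Type*}

/-- Degree of a vertex as a real number. -/
noncomputable def degR [Fintype V] (G : SimpleGraph V) (x : V) : ℝ :=
  ((Finset.univ.filter fun y => G.Adj x y).card : ℝ)

/-- Number of edges of a graph. -/
noncomputable def esize (G : SimpleGraph V) : ℕ := Nat.card G.edgeSet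

/-- Dirichlet energy of a potential. -/
noncomputable def energyFn [Fintype V] (G : SimpleGraph V) (φ : V → ℝ) : ℝ :=
  (1/2) * ∑ u, ∑ v, if G.Adj u v then (φ u - φ v)^2 else 0

/-- Effective resistance between two vertices (unit resistors on edges),
via the Dirichlet variational principle: the reciprocal of the minimal energy
of a potential with value 1 at `x` and 0 at `y`. -/
noncomputable def eres [Fintype V] (G : SimpleGraph V) (x y : V) : ℝ :=
  (sInf {e : ℝ | ∃ φ : V → ℝ, φ x = 1 ∧ φ y = 0 ∧ e = energyFn G φ})⁻¹

/-- The transition matrix of the simple random walk, killed at `y`. -/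
noncomputable def hitMat [Fintype V] (G : SimpleGraph V) (y : V) : Matrix V V ℝ :=
  Matrix.of fun u v => if v = y then 0 else if G.Adj u v then (degR G u)⁻¹ else 0

/-- Expected hitting time `H_{xy}` of the simple random walk from `x` to `y`,
expressed as the sum of the survival probabilities of the walk killed at `y`. -/
noncomputable def hitting [Fintype V] (G : SimpleGraph V) (x y : V) : ℝ :=
  if x = y then 0 else ∑' k : ℕ, ∑ z, (hitMat G y ^ k) x z

/-- Resistance-centrality `R(x)`. -/
noncomputable def Rres [Fintype V] (G : SimpleGraph V) (x : V) : ℝ := ∑ y, eres G x y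

/-- Weighted resistance-centrality `R^w(x)`. -/
noncomputable def Rw [Fintype V] (G : SimpleGraph V) (x : V) : ℝ :=
  ∑ y, degR G y * eres G x y

/-- Kirchhoff index `Kf(G)`. -/
noncomputable def Kf [Fintype V] (G : SimpleGraph V) : ℝ :=
  (1/2) * ∑ x, ∑ y, eres G x y

/-- Additive degree-Kirchhoff index `Kf⁺(G)`. -/
noncomputable def KfPlus [Fintype V] (G : SimpleGraph V) : ℝ :=
  (1/2) * ∑ x, ∑ y, (degR G x + degR G y) * eres G x y

/-- Multiplicative degree-Kirchhoff index `Kf*(G)`. -/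
noncomputable def KfStar [Fintype V] (G : SimpleGraph V) : ℝ :=
  (1/2) * ∑ x, ∑ y, degR G x * degR G y * eres G x y

/-- Cover cost `CC(x) = Σ_y H_{xy}`. -/
noncomputable def coverCost [Fintype V] (G : SimpleGraph V) (x : V) : ℝ :=
  ∑ y, hitting G x y

/-- Reverse cover cost `RC(x) = Σ_y H_{yx}`. -/
noncomputable def reverseCoverCost [Fintype V] (G : SimpleGraph V) (x : V) : ℝ :=
  ∑ y, hitting G y x

/-- Centrality (transmission) `D(x) = Σ_y d(x,y)`. -/
noncomputable def Dcent [Fintype V] (G : SimpleGraph V) (x : V) : ℝ :=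
  ∑ y, (G.dist x y : ℝ)

/-- Weighted centrality `D^w(x) = Σ_y deg(y)·d(x,y)`. -/
noncomputable def Dw [Fintype V] (G : SimpleGraph V) (x : V) : ℝ :=
  ∑ y, degR G y * (G.dist x y : ℝ)

/-- Wiener index `W(G)`. -/
noncomputable def Wiener [Fintype V] (G : SimpleGraph V) : ℝ :=
  (1/2) * ∑ x, ∑ y, (G.dist x y : ℝ)

/-- `D_{T}(v)`: sum of distances from `v` to the vertices of its connected
component in `G'` (used for the branch trees of a unicyclic graph). -/
noncomputable def branchD [Fintype V] (G' : SimpleGraph V) (v : V) : ℝ :=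
  ∑ u, if G'.Reachable v u then (G'.dist v u : ℝ) else 0

/-- The set of edges of the cycle `c 0 - c 1 - ⋯ - c (l-1) - c 0`. -/
def cycleEdges {l : ℕ} [NeZero l] (c : Fin l → V) : Set (Sym2 V) :=
  Set.range fun i : Fin l => s(c i, c (i + 1))

/-- Distance from a vertex to a set of vertices. -/
noncomputable def distToSet [Fintype V] (G : SimpleGraph V) (x : V) (s : Set V) : ℕ :=
  sInf {d | ∃ y ∈ s, G.dist x y = d}

/-- `v` is the center of a star. -/
def IsStarCenter (G : SimpleGraph V) (v : V) : Prop := ∀ u, u ≠ v → G.Adj v u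

/-- `G` is a star. -/
def IsStar (G : SimpleGraph V) : Prop := ∃ v, IsStarCenter G v

/-- The lollipop graph `P_n^l` : a cycle `C_l` on `0,…,l-1` together with a
path on `l,…,n-1` attached at the cycle vertex `0`. -/
def lollipop (n l : ℕ) : SimpleGraph (Fin n) :=
  SimpleGraph.fromRel (fun a b =>
    (a.val + 1 = b.val ∧ b.val < l) ∨ (a.val = 0 ∧ b.val = l - 1) ∨
    (a.val = 0 ∧ b.val = l) ∨ (l ≤ a.val ∧ a.val + 1 = b.val))

/-- The graph `S_n^l` : a cycle `C_l` on `0,…,l-1` with `n - l` pendant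
vertices `l,…,n-1` attached at the cycle vertex `0`. -/
def starCycle (n l : ℕ) : SimpleGraph (Fin n) :=
  SimpleGraph.fromRel (fun a b =>
    (a.val + 1 = b.val ∧ b.val < l) ∨ (a.val = 0 ∧ b.val = l - 1) ∨
    (a.val = 0 ∧ l ≤ b.val))

/-- The cycle graph `C_n` on `Fin n`. -/
def cycleG (n : ℕ) : SimpleGraph (Fin n) :=
  SimpleGraph.fromRel (fun a b => a.val + 1 = b.val ∨ (a.val = 0 ∧ b.val = n - 1))

lemma energyFn_nonneg' [Fintype V] (G : SimpleGraph V) (φ : V → ℝ) : 0 ≤ energyFn G φ := by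
  unfold energyFn
  have : 0 ≤ ∑ u, ∑ v, (if G.Adj u v then (φ u - φ v)^2 else 0) :=
    Finset.sum_nonneg fun u _ => Finset.sum_nonneg fun v _ => by split_ifs <;> positivity
  linarith

lemma sum_ind [Fintype V] (u p : V) (K : ℝ) :
    ∑ a, ∑ b, ((if a = u ∧ b = p then K else 0) + (if a = p ∧ b = u then K else 0)) = 2 * K := by
  simp only [Finset.sum_add_distrib, ite_and]
  simp
  ring

lemma energy_edge [Fintype V] (G : SimpleGraph V) (φ : V → ℝ) {u p : V} (h : G.Adj u p) :
    (φ u - φ p)^2 ≤ energyFn G φ := by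
  have h1 := sum_ind u p ((φ u - φ p)^2)
  have hne := h.ne
  have h2 : ∑ a, ∑ b, ((if a = u ∧ b = p then (φ u - φ p)^2 else 0)
      + (if a = p ∧ b = u then (φ u - φ p)^2 else 0)) ≤
      ∑ a, ∑ b, (if G.Adj a b then (φ a - φ b)^2 else 0) := by
    refine Finset.sum_le_sum fun a _ => Finset.sum_le_sum fun b _ => ?_
    by_cases h3 : a = u ∧ b = p
    · obtain ⟨rfl, rfl⟩ := h3
      simp [h, hne]
    · by_cases h4 : a = p ∧ b = u
      · obtain ⟨rfl, rfl⟩ := h4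
        simp [h.symm, hne.symm]
        nlinarith
      · simp only [h3, h4, if_false]
        split_ifs <;> simp
        positivity
  unfold energyFn
  linarith

lemma energy_walk [Fintype V] (G : SimpleGraph V) (φ : V → ℝ) {x y : V} (w : G.Walk x y) :
    |φ x - φ y| ≤ w.length * Real.sqrt (energyFn G φ) := by
  induction w with
  | nil => simp
  | @cons a b d h w ih =>
    have h1 : |φ a - φ b| ≤ Real.sqrt (energyFn G φ) := Real.abs_le_sqrt (energy_edge G φ h)
    have h2 := abs_sub_le (φ a) (φ b) (φ d)
    simp only [SimpleGraph.Walk.length_cons]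
    push_cast
    linarith

noncomputable def cond' [Fintype V] (G : SimpleGraph V) (x y : V) : ℝ :=
  sInf {e : ℝ | ∃ φ : V → ℝ, φ x = 1 ∧ φ y = 0 ∧ e = energyFn G φ}

lemma cond_le [Fintype V] (G : SimpleGraph V) {x y : V} (φ : V → ℝ) (hx : φ x = 1) (hy : φ y = 0) :
    cond' G x y ≤ energyFn G φ := by
  apply csInf_le
  · refine ⟨0, ?_⟩
    rintro e ⟨φ, _, _, rfl⟩
    exact energyFn_nonneg' G φ
  · exact ⟨φ, hx, hy, rfl⟩

lemma le_cond [Fintype V] (G : SimpleGraph V) {x y : V} (hxy : x ≠ y) (K : ℝ)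
    (h : ∀ φ : V → ℝ, φ x = 1 → φ y = 0 → K ≤ energyFn G φ) : K ≤ cond' G x y := by
  apply le_csInf
  · exact ⟨_, fun z => if z = x then 1 else 0, by simp, by simp [hxy.symm], rfl⟩
  · rintro e ⟨φ, h1, h2, rfl⟩
    exact h φ h1 h2

lemma cond_pos [Fintype V] (G : SimpleGraph V) (hc : G.Connected) {x y : V} (hxy : x ≠ y) :
    0 < cond' G x y := by
  obtain ⟨w⟩ := hc.preconnected x y
  have hw : 0 < w.length := by
    rcases Nat.eq_zero_or_pos w.length with h | h
    · exact absurd (SimpleGraph.Walk.eq_of_length_eq_zero h) hxy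
    · exact h
  have hw' : (0:ℝ) < w.length := by exact_mod_cast hw
  refine lt_of_lt_of_le (b := 1 / (w.length:ℝ)^2) (by positivity) (le_cond G hxy _ ?_)
  intro φ h1 h2
  have h3 := energy_walk G φ w
  rw [h1, h2] at h3
  simp at h3
  rw [div_le_iff₀ (by positivity)]
  have h4 := Real.sq_sqrt (energyFn_nonneg' G φ)
  have h5 := Real.sqrt_nonneg (energyFn G φ)
  nlinarith

lemma energy_scale [Fintype V] (G : SimpleGraph V) (φ : V → ℝ) (t : ℝ) :
    energyFn G (fun z => t * φ z) = t^2 * energyFn G φ := by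
  have h : ∀ a b, (if G.Adj a b then (t * φ a - t * φ b)^2 else 0) =
      t^2 * (if G.Adj a b then (φ a - φ b)^2 else 0) := by
    intro a b
    split_ifs <;> ring
  simp only [energyFn, h, ← Finset.mul_sum]
  ring

lemma energy_ge [Fintype V] (G : SimpleGraph V) {x y : V} (φ : V → ℝ) (hy : φ y = 0) :
    (φ x)^2 * cond' G x y ≤ energyFn G φ := by
  by_cases h : φ x = 0
  · simp [h, energyFn_nonneg']
  · have h1 := cond_le G (x := x) (y := y) (fun z => (φ x)⁻¹ * φ z) (by field_simp) (by simp [hy])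
    rw [energy_scale] at h1
    have h2 : 0 < (φ x)^2 := by positivity
    calc _ ≤ (φ x)^2 * ((φ x)⁻¹^2 * energyFn G φ) := by gcongr
      _ = _ := by field_simp

lemma energy_low [Fintype V] (G : SimpleGraph V) (S : Set V) {u p : V} (hu : u ∈ S) (hp : p ∉ S)
    (hadj : G.Adj u p) (hcut : ∀ a ∈ S, ∀ b ∉ S, G.Adj a b → a = u ∧ b = p) (φ : V → ℝ) :
    energyFn G (fun z => if z ∈ S then φ p else φ z) + (φ u - φ p)^2 ≤ energyFn G φ := by
  have h1 := sum_ind u p ((φ u - φ p)^2)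
  have h2 : ∑ a, ∑ b, ((if G.Adj a b then
      ((if a ∈ S then φ p else φ a) - (if b ∈ S then φ p else φ b))^2 else 0) +
      ((if a = u ∧ b = p then (φ u - φ p)^2 else 0)
      + (if a = p ∧ b = u then (φ u - φ p)^2 else 0))) ≤
      ∑ a, ∑ b, (if G.Adj a b then (φ a - φ b)^2 else 0) := by
    refine Finset.sum_le_sum fun a _ => Finset.sum_le_sum fun b _ => ?_
    have hne := hadj.ne
    by_cases hab : G.Adj a b
    · by_cases ha : a ∈ S <;> by_cases hb : b ∈ S
      · have e1 : ¬ (a = u ∧ b = p) := by rintro ⟨rfl, rfl⟩; exact hp hb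
        have e2 : ¬ (a = p ∧ b = u) := by rintro ⟨rfl, rfl⟩; exact hp ha
        simp [hab, ha, hb, e1, e2]; positivity
      · obtain ⟨rfl, rfl⟩ := hcut a ha b hb hab
        simp [hab, ha, hb, hne]
      · obtain ⟨rfl, rfl⟩ := hcut b hb a ha hab.symm
        simp [hab, ha, hb, hne.symm]
        nlinarith
      · have e1 : ¬ (a = u ∧ b = p) := by rintro ⟨rfl, rfl⟩; exact ha hu
        have e2 : ¬ (a = p ∧ b = u) := by rintro ⟨rfl, rfl⟩; exact hb hu
        simp [hab, ha, hb, e1, e2]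
    · have e1 : ¬ (a = u ∧ b = p) := by rintro ⟨rfl, rfl⟩; exact hab hadj
      have e2 : ¬ (a = p ∧ b = u) := by rintro ⟨rfl, rfl⟩; exact hab hadj.symm
      simp [hab, e1, e2]
  simp only [Finset.sum_add_distrib] at h1 h2
  unfold energyFn
  linarith

lemma energy_up [Fintype V] (G : SimpleGraph V) (S : Set V) {u p : V} (hu : u ∈ S) (hp : p ∉ S)
    (hadj : G.Adj u p) (hcut : ∀ a ∈ S, ∀ b ∉ S, G.Adj a b → a = u ∧ b = p) (ψ : V → ℝ) (t : ℝ) :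
    energyFn G (fun z => if z ∈ S then 1 else t * ψ z) ≤
      t^2 * energyFn G ψ + (1 - t * ψ p)^2 := by
  rw [← energy_scale]
  have h1 := sum_ind u p ((1 - t * ψ p)^2)
  have h2 : ∑ a, ∑ b, (if G.Adj a b then
      ((if a ∈ S then 1 else t * ψ a) - (if b ∈ S then 1 else t * ψ b))^2 else 0) ≤
      ∑ a, ∑ b, ((if G.Adj a b then (t * ψ a - t * ψ b)^2 else 0) +
      ((if a = u ∧ b = p then (1 - t * ψ p)^2 else 0)
      + (if a = p ∧ b = u then (1 - t * ψ p)^2 else 0))) := by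
    refine Finset.sum_le_sum fun a _ => Finset.sum_le_sum fun b _ => ?_
    have hne := hadj.ne
    have hA : 0 ≤ (if a = u ∧ b = p then (1 - t * ψ p)^2 else 0)
      + (if a = p ∧ b = u then (1 - t * ψ p)^2 else 0) := by
      apply add_nonneg <;> split_ifs <;> positivity
    by_cases hab : G.Adj a b
    · by_cases ha : a ∈ S <;> by_cases hb : b ∈ S
      · simp only [hab, ha, hb, if_true]
        have := sq_nonneg (t * ψ a - t * ψ b)
        linarith
      · obtain ⟨rfl, rfl⟩ := hcut a ha b hb hab
        simp [hab, ha, hb, hne]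
        positivity
      · obtain ⟨rfl, rfl⟩ := hcut b hb a ha hab.symm
        simp [hab, ha, hb, hne.symm]
        nlinarith [sq_nonneg (t * ψ a - t * ψ b)]
      · simp only [hab, ha, hb, if_true, if_false]
        linarith
    · simp only [hab, if_false]
      linarith
  simp only [Finset.sum_add_distrib] at h1 h2
  unfold energyFn
  linarith

lemma eres_self [Fintype V] (G : SimpleGraph V) (x : V) : eres G x x = 0 := by
  have : {e : ℝ | ∃ φ : V → ℝ, φ x = 1 ∧ φ x = 0 ∧ e = energyFn G φ} = ∅ := by
    ext e
    simp only [Set.mem_ofPred_eq, Set.mem_empty_iff_false, iff_false]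
    rintro ⟨φ, h1, h2, _⟩
    linarith
  simp [eres, this]

lemma energy_refl [Fintype V] (G : SimpleGraph V) (φ : V → ℝ) :
    energyFn G (fun z => 1 - φ z) = energyFn G φ := by
  unfold energyFn
  congr 1
  refine Finset.sum_congr rfl fun a _ => Finset.sum_congr rfl fun b _ => ?_
  split_ifs <;> ring

lemma eres_comm [Fintype V] (G : SimpleGraph V) (x y : V) : eres G x y = eres G y x := by
  unfold eres
  congr 2
  ext e
  constructor
  · rintro ⟨φ, h1, h2, rfl⟩
    exact ⟨fun z => 1 - φ z, by simp [h2], by simp [h1], (energy_refl G φ).symm⟩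
  · rintro ⟨φ, h1, h2, rfl⟩
    exact ⟨fun z => 1 - φ z, by simp [h2], by simp [h1], (energy_refl G φ).symm⟩

lemma eres_bridge [Fintype V] (G : SimpleGraph V) (hc : G.Connected) (S : Set V) {u p : V}
    (hu : u ∈ S) (hp : p ∉ S)
    (hadj : G.Adj u p) (hcut : ∀ a ∈ S, ∀ b ∉ S, G.Adj a b → a = u ∧ b = p) {y : V} (hy : y ∉ S) :
    eres G u y = eres G p y + 1 := by
  have huy : u ≠ y := by rintro rfl; exact hy hu
  by_cases hpy : p = y
  · subst hpy
    rw [eres_self]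
    have h1 : cond' G u p = 1 := by
      apply le_antisymm
      · refine (cond_le G (fun z => if z ∈ S then 1 else 0 * (0:ℝ)) (by simp [hu]) (by simp [hp])).trans ?_
        have := energy_up G S hu hp hadj hcut (fun _ => 0) 0
        simpa using this
      · refine le_cond G huy _ fun φ h1 h2 => ?_
        have := energy_edge G φ hadj
        rw [h1, h2] at this
        linarith
    change (cond' G u p)⁻¹ = _
    rw [h1]; norm_num
  · have hC := cond_pos G hc hpy
    set C := cond' G p y with hCdef
    have h1 : cond' G u y = C / (1 + C) := by
      apply le_antisymm
      · have key : (1 + C)^2 * cond' G u y - C^2 ≤ C := by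
          refine le_cond G hpy _ fun ψ h1 h2 => ?_
          have a1 := energy_up G S hu hp hadj hcut ψ (1/(1+C))
          have a2 := cond_le G (x := u) (y := y)
            (fun z => if z ∈ S then 1 else 1/(1+C) * ψ z) (by simp [hu]) (by simp [hy, h2])
          have a3 := a2.trans a1
          rw [h1] at a3
          have a4 : (1 + C)^2 * ((1/(1+C))^2 * energyFn G ψ + (1 - 1/(1+C) * 1)^2)
            = energyFn G ψ + C^2 := by field_simp; ring
          have a5 : (1 + C)^2 * cond' G u y ≤ energyFn G ψ + C^2 := by
            rw [← a4]; gcongr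
          linarith
        rw [le_div_iff₀ (by positivity)]
        nlinarith
      · refine le_cond G huy _ fun φ h1 h2 => ?_
        have a1 := energy_low G S hu hp hadj hcut φ
        have a2 := energy_ge G (x := p) (y := y) (fun z => if z ∈ S then φ p else φ z) (by simp [hy, h2])
        simp only [hp, if_false] at a2
        rw [h1] at a1
        rw [div_le_iff₀ (by positivity)]
        nlinarith [sq_nonneg (φ p * (1 + C) - 1)]
    change (cond' G u y)⁻¹ = C⁻¹ + 1
    rw [h1]
    field_simp

lemma exists_depth (G : SimpleGraph V) (hconn : G.Connected) {l : ℕ} [NeZero l]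
    (c : Fin l → V) : ∃ h : V → ℕ, (∀ i, h (c i) = 0) ∧ (∀ w, h w = 0 → w ∈ Set.range c) ∧
      (∀ a b, G.Adj a b → h a ≤ h b + 1) ∧
      ∀ w, w ∉ Set.range c → ∃ q, G.Adj w q ∧ h w = h q + 1 := by
  have hne : (Finset.univ : Finset (Fin l)).Nonempty := ⟨0, Finset.mem_univ _⟩
  let h : V → ℕ := fun w => Finset.univ.inf' hne (fun i => G.dist w (c i))
  have hle : ∀ w i, h w ≤ G.dist w (c i) := fun w i => Finset.inf'_le _ (Finset.mem_univ i)
  have hex : ∀ w, ∃ i, h w = G.dist w (c i) := fun w => by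
    obtain ⟨i, _, hi⟩ := Finset.exists_mem_eq_inf' hne (fun i => G.dist w (c i))
    exact ⟨i, hi⟩
  have hlip : ∀ a b, G.Adj a b → h a ≤ h b + 1 := by
    intro a b hab
    obtain ⟨i, hi⟩ := hex b
    have h1 := hle a i
    have h2 := hconn.dist_triangle (u := a) (v := b) (w := c i)
    rw [SimpleGraph.dist_eq_one_iff_adj.mpr hab] at h2
    omega
  have h0 : ∀ w, h w = 0 → w ∈ Set.range c := by
    intro w hw
    obtain ⟨i, hi⟩ := hex w
    rw [hw] at hi
    exact ⟨i, ((hconn.dist_eq_zero_iff).mp hi.symm).symm⟩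
  refine ⟨h, fun i => ?_, h0, hlip, ?_⟩
  · have := hle (c i) i
    simpa using this
  · intro w hw
    obtain ⟨i, hi⟩ := hex w
    obtain ⟨W, hW⟩ := hconn.exists_walk_length_eq_dist w (c i)
    cases W with
    | nil => exact absurd ⟨i, rfl⟩ hw
    | @cons _ q _ hadj W' =>
      refine ⟨q, hadj, ?_⟩
      have h1 := hle q i
      have h2 := SimpleGraph.dist_le W'
      have h3 := hlip w q hadj
      simp only [SimpleGraph.Walk.length_cons] at hW
      omega

lemma exists_parent (G : SimpleGraph V) (hconn : G.Connected) {l : ℕ} [NeZero l]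
    (c : Fin l → V) : ∃ (h : V → ℕ) (p : V → V), (∀ i, h (c i) = 0) ∧
      (∀ w, h w = 0 → w ∈ Set.range c) ∧
      (∀ a b, G.Adj a b → h a ≤ h b + 1) ∧ (∀ i, p (c i) = c i) ∧
      ∀ w, w ∉ Set.range c → G.Adj w (p w) ∧ h w = h (p w) + 1 := by
  obtain ⟨h, h1, h2, h3, h4⟩ := exists_depth G hconn c
  choose! q hq using h4
  refine ⟨h, fun w => if w ∈ Set.range c then w else q w, h1, h2, h3, by simp, ?_⟩
  intro w hw
  simpa only [hw, if_false] using hq w hw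

lemma fin_add_two_ne {l : ℕ} [NeZero l] (hl : 3 ≤ l) (i : Fin l) : i + 1 + 1 ≠ i := by
  intro h
  have h1 : (1 : Fin l) + 1 = 0 := by
    have : i + (1 + 1) = i + 0 := by rw [← add_assoc, h, add_zero]
    exact add_left_cancel this
  have h2 := congrArg Fin.val h1
  simp only [Fin.val_add, Fin.val_zero, Fin.val_one'] at h2
  rw [Nat.mod_eq_of_lt (show 1 < l by omega), Nat.mod_eq_of_lt (show 1 + 1 < l by omega)] at h2
  omega

/-- edge parametrization -/
lemma edge_bij [Fintype V] (G : SimpleGraph V) (n l : ℕ) [NeZero l]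
    (hn : Fintype.card V = n) (huni : esize G = n)
    (hl : 3 ≤ l) (c : Fin l → V) (hinj : Function.Injective c)
    (hadj : ∀ i : Fin l, G.Adj (c i) (c (i + 1))) (h : V → ℕ) (p : V → V)
    (hp : ∀ w, w ∉ Set.range c → G.Adj w (p w) ∧ h w = h (p w) + 1) :
    ∃ e : (Fin l ⊕ {u : V // u ∉ Set.range c}) ≃ G.edgeSet,
      (∀ i, (e (Sum.inl i) : Sym2 V) = s(c i, c (i+1))) ∧
      (∀ u : {u : V // u ∉ Set.range c}, (e (Sum.inr u) : Sym2 V) = s(u.1, p u.1)) := by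
  let f : (Fin l ⊕ {u : V // u ∉ Set.range c}) → G.edgeSet := fun z =>
    match z with
    | Sum.inl i => ⟨s(c i, c (i+1)), hadj i⟩
    | Sum.inr u => ⟨s(u.1, p u.1), (hp u.1 u.2).1⟩
  have finj : Function.Injective f := by
    rintro (i | u) (j | w) hij
    · have h1 : s(c i, c (i+1)) = s(c j, c (j+1)) := congrArg Subtype.val hij
      rw [Sym2.eq_iff] at h1
      rcases h1 with ⟨h1, _⟩ | ⟨h1, h2⟩
      · rw [hinj h1]
      · have e1 := hinj h1
        have e2 := hinj h2
        exfalso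
        rw [e1] at e2
        exact fin_add_two_ne hl j e2
    · exfalso
      have h1 : s(c i, c (i+1)) = s(w.1, p w.1) := congrArg Subtype.val hij
      rw [Sym2.eq_iff] at h1
      rcases h1 with ⟨h1, _⟩ | ⟨_, h1⟩
      · exact w.2 ⟨_, h1⟩
      · exact w.2 ⟨_, h1⟩
    · exfalso
      have h1 : s(u.1, p u.1) = s(c j, c (j+1)) := congrArg Subtype.val hij
      rw [Sym2.eq_iff] at h1
      rcases h1 with ⟨h1, _⟩ | ⟨h1, _⟩
      · exact u.2 ⟨_, h1.symm⟩
      · exact u.2 ⟨_, h1.symm⟩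
    · have h1 : s(u.1, p u.1) = s(w.1, p w.1) := congrArg Subtype.val hij
      rw [Sym2.eq_iff] at h1
      rcases h1 with ⟨h1, _⟩ | ⟨h1, h2⟩
      · rw [Subtype.ext h1]
      · have e1 := (hp u.1 u.2).2
        have e2 := (hp w.1 w.2).2
        rw [h2] at e1
        rw [← h1] at e2
        omega
  have hcard : Fintype.card (Fin l ⊕ {u : V // u ∉ Set.range c}) = Fintype.card G.edgeSet := by
    have h1 : Fintype.card G.edgeSet = n := by
      rw [← huni, esize, Nat.card_eq_fintype_card]
    have h2 := Fintype.card_subtype_compl (fun u => u ∈ Set.range c)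
    have h3 : Fintype.card {u // u ∈ Set.range c} = l := by
      rw [← Fintype.card_congr (Equiv.ofInjective c hinj)]
      exact Fintype.card_fin l
    have h4 : l ≤ n := by
      have := Fintype.card_le_of_injective c hinj
      simpa [hn] using this
    rw [Fintype.card_sum, h1, h2, h3, hn, Fintype.card_fin]
    omega
  have fbij := (Fintype.bijective_iff_injective_and_card f).mpr ⟨finj, hcard⟩
  exact ⟨Equiv.ofBijective f fbij, fun i => rfl, fun u => rfl⟩

lemma card_NC [Fintype V] (n l : ℕ) (hn : Fintype.card V = n) (c : Fin l → V)
    (hinj : Function.Injective c) :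
    (Fintype.card {u : V // u ∉ Set.range c} : ℝ) = (n : ℝ) - l := by
  have h2 := Fintype.card_subtype_compl (fun u => u ∈ Set.range c)
  have h3 : Fintype.card {u // u ∈ Set.range c} = l := by
    rw [← Fintype.card_congr (Equiv.ofInjective c hinj)]
    exact Fintype.card_fin l
  have h4 : l ≤ n := by
    have := Fintype.card_le_of_injective c hinj
    simpa [hn] using this
  rw [h2, h3, hn, Nat.cast_sub h4]

lemma sum_split [Fintype V] {l : ℕ} (c : Fin l → V) (hinj : Function.Injective c) (f : V → ℝ) :
    ∑ x, f x = ∑ i, f (c i) + ∑ u : {u : V // u ∉ Set.range c}, f u.1 := by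
  rw [← Fintype.sum_subtype_add_sum_subtype (fun u => u ∈ Set.range c) f]
  have key : ∑ i : {u // u ∈ Set.range c}, f i.1 = ∑ i, f (c i) :=
    (Fintype.sum_equiv (Equiv.ofInjective c hinj) (fun i => f (c i))
      (fun z : {u // u ∈ Set.range c} => f z.1) (fun i => rfl)).symm
  rw [← key]
  congr!

lemma sum_deg [Fintype V] (G : SimpleGraph V) (n l : ℕ) [NeZero l]
    (hn : Fintype.card V = n) (huni : esize G = n)
    (hl : 3 ≤ l) (c : Fin l → V) (hinj : Function.Injective c)
    (hadj : ∀ i : Fin l, G.Adj (c i) (c (i + 1))) (h : V → ℕ) (p : V → V)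
    (hp : ∀ w, w ∉ Set.range c → G.Adj w (p w) ∧ h w = h (p w) + 1) (f : V → ℝ) :
    ∑ x, degR G x * f x = 2 * ∑ x, f x +
      ∑ u : {u : V // u ∉ Set.range c}, (f (p u.1) - f u.1) := by
  obtain ⟨e, e1, e2⟩ := edge_bij G n l hn huni hl c hinj hadj h p hp
  have hd : ∀ x, degR G x = ∑ a : G.edgeSet, if x ∈ (a : Sym2 V) then (1:ℝ) else 0 := by
    intro x
    have h1 : degR G x = G.degree x := by
      unfold degR
      rw [← SimpleGraph.card_neighborFinset_eq_degree]
      congr 2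
      ext y
      simp
    rw [h1, ← SimpleGraph.card_incidenceFinset_eq_degree]
    rw [Finset.sum_boole]
    norm_cast
    refine Finset.card_bij' (fun a ha => ⟨a, by
      have := (SimpleGraph.mem_incidenceFinset G x a).mp ha
      exact this.1⟩) (fun a _ => a.1) ?_ ?_ ?_ ?_
    · intro a ha
      have := (SimpleGraph.mem_incidenceFinset G x a).mp ha
      simpa using this.2
    · intro a ha
      simp only [Finset.mem_filter, Finset.mem_univ, true_and] at ha
      exact (SimpleGraph.mem_incidenceFinset G x a).mpr ⟨a.2, ha⟩
    · intros; rfl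
    · intros; rfl
  have hpair : ∀ a b : V, a ≠ b → ∑ x, (if x ∈ s(a,b) then (1:ℝ) else 0) * f x = f a + f b := by
    intro a b hab
    have : ∀ x, (if x ∈ s(a,b) then (1:ℝ) else 0) * f x =
        (if x = a then f x else 0) + (if x = b then f x else 0) := by
      intro x
      by_cases h1 : x = a
      · subst h1; simp [hab]
      · by_cases h2 : x = b
        · subst h2; simp [h1]
        · simp [h1, h2]
    rw [Finset.sum_congr rfl fun x _ => this x, Finset.sum_add_distrib]
    simp
  calc ∑ x, degR G x * f x
      = ∑ x, ∑ a : G.edgeSet, (if x ∈ (a : Sym2 V) then (1:ℝ) else 0) * f x := by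
        refine Finset.sum_congr rfl fun x _ => ?_
        rw [hd, Finset.sum_mul]
    _ = ∑ a : G.edgeSet, ∑ x, (if x ∈ (a : Sym2 V) then (1:ℝ) else 0) * f x := Finset.sum_comm
    _ = ∑ z, ∑ x, (if x ∈ (e z : Sym2 V) then (1:ℝ) else 0) * f x :=
        (e.sum_comp (fun a : G.edgeSet =>
          ∑ x, (if x ∈ (a : Sym2 V) then (1:ℝ) else 0) * f x)).symm
    _ = ∑ i, (f (c i) + f (c (i+1))) +
          ∑ u : {u : V // u ∉ Set.range c}, (f u.1 + f (p u.1)) := by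
        rw [Fintype.sum_sum_type]
        congr 1
        · refine Finset.sum_congr rfl fun i _ => ?_
          rw [e1, hpair _ _ (hadj i).ne]
        · refine Finset.sum_congr rfl fun u _ => ?_
          rw [e2, hpair _ _ (hp u.1 u.2).1.ne]
    _ = _ := by
        rw [sum_split c hinj f]
        simp only [Finset.sum_add_distrib, Finset.sum_sub_distrib]
        have : ∑ i, f (c (i+1)) = ∑ i, f (c i) :=
          Equiv.sum_comp (Equiv.addRight (1 : Fin l)) (fun i => f (c i))
        rw [this]
        ring

lemma branch_sum [Fintype V] (G : SimpleGraph V) (n l : ℕ) [NeZero l]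
    (hn : Fintype.card V = n) (huni : esize G = n)
    (hl : 3 ≤ l) (c : Fin l → V) (hinj : Function.Injective c)
    (hadj : ∀ i : Fin l, G.Adj (c i) (c (i + 1))) (h : V → ℕ) (p : V → V)
    (h0 : ∀ i, h (c i) = 0)
    (hlip : ∀ a b, G.Adj a b → h a ≤ h b + 1) (hpc : ∀ i, p (c i) = c i)
    (hp : ∀ w, w ∉ Set.range c → G.Adj w (p w) ∧ h w = h (p w) + 1) :
    ∑ i : Fin l, branchD (G.deleteEdges (cycleEdges c)) (c i) = ∑ w, (h w : ℝ) := by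
  obtain ⟨e, e1, e2⟩ := edge_bij G n l hn huni hl c hinj hadj h p hp
  set H := G.deleteEdges (cycleEdges c) with hH
  have hHadj : ∀ w, w ∉ Set.range c → H.Adj w (p w) := by
    intro w hw
    rw [hH, SimpleGraph.deleteEdges_adj]
    refine ⟨(hp w hw).1, ?_⟩
    rintro ⟨i, hi⟩
    simp only [Sym2.eq_iff] at hi
    rcases hi with ⟨h1, _⟩ | ⟨_, h1⟩
    · exact hw ⟨_, h1⟩
    · exact hw ⟨_, h1⟩
  let q : V → V := fun w => p^[h w] w
  have hqp : ∀ w, w ∉ Set.range c → q (p w) = q w := by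
    intro w hw
    change p^[h (p w)] (p w) = p^[h w] w
    rw [(hp w hw).2, Function.iterate_succ_apply]
  have hqc : ∀ i, q (c i) = c i := fun i => Function.iterate_fixed (hpc i) _
  have hqadj : ∀ a b, H.Adj a b → q a = q b := by
    intro a b hab
    rw [hH, SimpleGraph.deleteEdges_adj] at hab
    obtain ⟨z, hz⟩ := e.surjective ⟨s(a,b), hab.1⟩
    rcases z with i | u
    · exfalso
      apply hab.2
      refine ⟨i, ?_⟩
      have := e1 i
      rw [hz] at this
      exact this.symm
    · have := e2 u
      rw [hz] at this
      simp only [Sym2.eq_iff] at this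
      rcases this with ⟨h1, h2⟩ | ⟨h1, h2⟩
      · rw [h1, h2, hqp _ u.2]
      · rw [h1, h2, hqp _ u.2]
  have hqr : ∀ a b, H.Reachable a b → q a = q b := by
    rintro a b ⟨W⟩
    induction W with
    | nil => rfl
    | cons hab _ ih => exact (hqadj _ _ hab).trans ih
  have hwalk : ∀ a b, ∀ W : H.Walk a b, h a ≤ h b + W.length := by
    intro a b W
    induction W with
    | nil => simp
    | cons hab W ih =>
      have := hlip _ _ (SimpleGraph.deleteEdges_le _ hab)
      simp only [SimpleGraph.Walk.length_cons]
      omega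
  have hex : ∀ m w, h w = m → ∃ i, ∃ W : H.Walk w (c i), W.length = m := by
    intro m
    induction m with
    | zero =>
      intro w hw
      by_cases hc : w ∈ Set.range c
      · obtain ⟨i, rfl⟩ := hc
        exact ⟨i, SimpleGraph.Walk.nil, rfl⟩
      · have := (hp w hc).2
        omega
    | succ m ih =>
      intro w hw
      by_cases hc : w ∈ Set.range c
      · obtain ⟨i, rfl⟩ := hc
        have := h0 i
        omega
      · obtain ⟨i, W, hW⟩ := ih (p w) (by have := (hp w hc).2; omega)
        exact ⟨i, SimpleGraph.Walk.cons (hHadj w hc) W, by simp [hW]⟩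
  unfold branchD
  rw [Finset.sum_comm]
  refine Finset.sum_congr rfl fun w _ => ?_
  obtain ⟨i, W, hW⟩ := hex _ w rfl
  have hr : H.Reachable (c i) w := ⟨W.reverse⟩
  rw [Finset.sum_eq_single i]
  · rw [if_pos hr]
    norm_cast
    apply le_antisymm
    · rw [← hW, SimpleGraph.dist_comm]
      exact SimpleGraph.dist_le W
    · rw [SimpleGraph.dist_comm]
      obtain ⟨W', hW'⟩ := hr.symm.exists_walk_length_eq_dist
      have := hwalk _ _ W'
      rw [h0] at this
      omega
  · intro j _ hj
    rw [if_neg]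
    intro hr'
    apply hj
    apply hinj
    rw [← hqc j, ← hqc i, hqr _ _ hr', hqr _ _ hr]
  · simp

/-- descendants -/
def desc (p : V → V) (u : V) : Set V := {w | ∃ k : ℕ, p^[k] w = u}

lemma desc_self (p : V → V) (u : V) : u ∈ desc p u := ⟨0, rfl⟩

lemma desc_iff (p : V → V) (u w : V) : w ∈ desc p u ↔ w = u ∨ p w ∈ desc p u := by
  constructor
  · rintro ⟨k, hk⟩
    cases k with
    | zero => exact Or.inl hk
    | succ k => exact Or.inr ⟨k, hk⟩
  · rintro (rfl | ⟨k, hk⟩)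
    · exact desc_self p w
    · exact ⟨k + 1, hk⟩

lemma main_formula [Fintype V] (G : SimpleGraph V) (n l : ℕ) [NeZero l]
    (hn : Fintype.card V = n) (hconn : G.Connected) (huni : esize G = n)
    (hl : 3 ≤ l) (c : Fin l → V) (hinj : Function.Injective c)
    (hadj : ∀ i : Fin l, G.Adj (c i) (c (i + 1))) :
    KfStar G = 4 * Kf G
      + 4 * (∑ i : Fin l, branchD (G.deleteEdges (cycleEdges c)) (c i))
      - (2 * (n : ℝ) + 1) * ((n : ℝ) - l) := by
  obtain ⟨h, p, h0, h0', hlip, hpc, hp⟩ := exists_parent G hconn c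
  rw [branch_sum G n l hn huni hl c hinj hadj h p h0 hlip hpc hp]
  obtain ⟨e, e1, e2⟩ := edge_bij G n l hn huni hl c hinj hadj h p hp
  have hdeg := sum_deg G n l hn huni hl c hinj hadj h p hp
  have hcN := card_NC n l hn c hinj
  have hcS : ∀ u, u ∉ Set.range c → ∀ i, c i ∉ desc p u := by
    rintro u hu i ⟨k, hk⟩
    rw [Function.iterate_fixed (hpc i)] at hk
    exact hu ⟨i, hk⟩
  have hple : ∀ w, h (p w) ≤ h w := by
    intro w
    by_cases hw : w ∈ Set.range c
    · obtain ⟨i, rfl⟩ := hw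
      rw [hpc]
    · have := (hp w hw).2
      omega
  have hkle : ∀ k w, h (p^[k] w) ≤ h w := by
    intro k
    induction k with
    | zero => intro w; exact le_rfl
    | succ k ih => intro w; exact (ih (p w)).trans (hple w)
  have hpS : ∀ u, u ∉ Set.range c → p u ∉ desc p u := by
    rintro u hu ⟨k, hk⟩
    have h1 := hkle k (p u)
    have h2 := (hp u hu).2
    rw [hk] at h1
    omega
  have hcut : ∀ u, u ∉ Set.range c → ∀ a ∈ desc p u, ∀ b ∉ desc p u, G.Adj a b →
      a = u ∧ b = p u := by
    intro u hu a ha b hb hab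
    obtain ⟨z, hz⟩ := e.surjective ⟨s(a,b), hab⟩
    rcases z with i | x
    · exfalso
      have := e1 i
      rw [hz] at this
      simp only [Sym2.eq_iff] at this
      rcases this with ⟨h1, h2⟩ | ⟨h1, h2⟩
      · exact hcS u hu _ (h1 ▸ ha)
      · exact hcS u hu _ (h1 ▸ ha)
    · have := e2 x
      rw [hz] at this
      simp only [Sym2.eq_iff] at this
      rcases this with ⟨h1, h2⟩ | ⟨h1, h2⟩
      · rw [← h1] at h2
        rcases (desc_iff p u a).mp ha with h3 | h3
        · exact ⟨h3, by rw [h2, h3]⟩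
        · exact absurd (h2 ▸ h3) hb
      · exfalso
        apply hb
        rw [← h2] at h1
        exact (desc_iff p u b).mpr (Or.inr (h1 ▸ ha))
  let σ : V → V → ℝ := fun u y => 2 * (if y ∈ desc p u then 1 else 0) - 1
  have hσ : ∀ u, u ∉ Set.range c → ∀ y, eres G (p u) y - eres G u y = σ u y := by
    intro u hu y
    by_cases hy : y ∈ desc p u
    · have := eres_bridge G hconn (desc p u)ᶜ (u := p u) (p := u) (hpS u hu)
        (by simp [desc_self]) (hp u hu).1.symm
        (by
          intro a ha b hb hab
          have := hcut u hu b (by simpa using hb) a ha hab.symm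
          exact ⟨this.2, this.1⟩) (y := y) (by simpa using hy)
      simp only [σ, hy, if_true]
      linarith
    · have := eres_bridge G hconn (desc p u) (u := u) (p := p u) (desc_self p u)
        (hpS u hu) (hp u hu).1 (hcut u hu) hy
      simp only [σ, hy, if_false]
      linarith
  have hσp : ∀ u, u ∉ Set.range c → ∀ w, w ∉ Set.range c →
      σ u (p w) - σ u w = if w = u then -2 else 0 := by
    intro u hu w hw
    by_cases hwu : w = u
    · subst hwu
      simp only [σ, hpS w hw, desc_self, if_true, if_false]
      norm_num
    · have := desc_iff p u w
      simp only [hwu, false_or] at this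
      simp [σ, this, hwu]
  have hcnt : ∀ m w, h w = m →
      ∑ u : {u : V // u ∉ Set.range c}, (if w ∈ desc p u.1 then (1:ℝ) else 0) = m := by
    intro m
    induction m with
    | zero =>
      intro w hw
      obtain ⟨i, rfl⟩ := h0' w hw
      simp only [Nat.cast_zero]
      refine Finset.sum_eq_zero fun u _ => ?_
      rw [if_neg (hcS u.1 u.2 i)]
    | succ m ih =>
      intro w hw
      have hwc : w ∉ Set.range c := by
        rintro ⟨i, rfl⟩
        have := h0 i
        omega
      have h1 := ih (p w) (by have := (hp w hwc).2; omega)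
      have h2 : ∀ u : {u : V // u ∉ Set.range c}, (if w ∈ desc p u.1 then (1:ℝ) else 0) =
          (if p w ∈ desc p u.1 then (1:ℝ) else 0) + (if u = ⟨w, hwc⟩ then 1 else 0) := by
        intro u
        by_cases hu : u = ⟨w, hwc⟩
        · subst hu
          simp [desc_self, hpS w hwc]
        · have h3 : ¬ w = u.1 := fun h => hu (Subtype.ext h.symm)
          have := desc_iff p u.1 w
          simp only [h3, false_or] at this
          simp [this, hu]
      rw [Finset.sum_congr rfl fun u _ => h2 u, Finset.sum_add_distrib, h1]
      simp
  -- total of σ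
  have htot : ∑ u : {u : V // u ∉ Set.range c}, ∑ y, σ u.1 y =
      2 * ∑ w, (h w : ℝ) - n * ((n : ℝ) - l) := by
    rw [Finset.sum_comm]
    have : ∀ y, ∑ u : {u : V // u ∉ Set.range c}, σ u.1 y = 2 * (h y : ℝ) - ((n:ℝ) - l) := by
      intro y
      simp only [σ, Finset.sum_sub_distrib, ← Finset.mul_sum]
      rw [hcnt _ y rfl, ← hcN]
      simp
    rw [Finset.sum_congr rfl fun y _ => this y, Finset.sum_sub_distrib, ← Finset.mul_sum]
    simp [hn]
    ring
  let g : V → ℝ := fun x => ∑ y, degR G y * eres G x y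
  have hg : ∀ x, g x = 2 * ∑ y, eres G x y + ∑ u : {u : V // u ∉ Set.range c}, σ u.1 x := by
    intro x
    change ∑ y, degR G y * eres G x y = _
    rw [hdeg (fun y => eres G x y)]
    congr 1
    refine Finset.sum_congr rfl fun u _ => ?_
    rw [← hσ u.1 u.2 x, eres_comm G x, eres_comm G x]
  have hgs : ∑ x, g x = 2 * (2 * Kf G) + (2 * ∑ w, (h w : ℝ) - n * ((n : ℝ) - l)) := by
    rw [Finset.sum_congr rfl fun x _ => hg x, Finset.sum_add_distrib, ← Finset.mul_sum,
      Finset.sum_comm (f := fun x (u : {u : V // u ∉ Set.range c}) => σ u.1 x), htot, Kf]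
    ring
  have hgd : ∀ w : {u : V // u ∉ Set.range c},
      g (p w.1) - g w.1 = 2 * ∑ y, σ w.1 y + (-2) := by
    intro w
    rw [hg, hg]
    have a1 : ∑ y, σ w.1 y = ∑ y, eres G (p w.1) y - ∑ y, eres G w.1 y := by
      rw [← Finset.sum_sub_distrib]
      exact Finset.sum_congr rfl fun y _ => (hσ w.1 w.2 y).symm
    have a2 : ∑ u : {u : V // u ∉ Set.range c}, σ u.1 (p w.1)
        - ∑ u : {u : V // u ∉ Set.range c}, σ u.1 w.1 = -2 := by
      rw [← Finset.sum_sub_distrib, Finset.sum_congr rfl fun u _ => hσp u.1 u.2 w.1 w.2]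
      rw [Finset.sum_eq_single w]
      · simp
      · intro b _ hb
        rw [if_neg]
        exact fun h => hb (Subtype.ext h.symm)
      · simp
    linarith
  have hfin : KfStar G = 1/2 * ∑ x, degR G x * g x := by
    unfold KfStar
    congr 1
    refine Finset.sum_congr rfl fun x _ => ?_
    rw [Finset.mul_sum]
    exact Finset.sum_congr rfl fun y _ => by ring
  rw [hfin, hdeg g, hgs, Finset.sum_congr rfl fun w _ => hgd w, Finset.sum_add_distrib,
    ← Finset.mul_sum, htot, Finset.sum_const, Finset.card_univ, nsmul_eq_mul, hcN]
  ring

/-- For an `n`-vertex unicyclic graph `G`,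
`Kf*(G) = 4·Kf(G) + 4·Σ_{i=1}^{l} D_{T_i}(v_i) − (2n+1)(n−l)`. -/
theorem kfStar_formula [Fintype V] (G : SimpleGraph V) (n l : ℕ) [NeZero l]
    (hn : Fintype.card V = n) (hconn : G.Connected) (huni : esize G = n)
    (hl : 3 ≤ l) (c : Fin l → V) (hinj : Function.Injective c)
    (hadj : ∀ i : Fin l, G.Adj (c i) (c (i + 1))) :
    KfStar G = 4 * Kf G
      + 4 * (∑ i : Fin l, branchD (G.deleteEdges (cycleEdges c)) (c i))
      - (2 * (n : ℝ) + 1) * ((n : ℝ) - l) := by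
  exact main_formula G n l hn hconn huni hl c hinj hadj
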